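/- Let n ≥ 2 and let Ω be a bounded open set in ℝⁿ with positive Lebesgue measure. Let G : [0, ∞) → ℝ be continuous and bounded with G(r) > 0 for all r > 0. Then there exists a point x⁰ in the closed convex hull of Ω such that the ℝⁿ-valued integral ∫_Ω G(|x − x⁰|)·(x − x⁰)/|x − x⁰| dx equals the zero vector (the integrand being extended by 0 at x = x⁰). -/

import Mathlib

open MeasureTheory Set

/-!
The vector field is a gradient. If `H` is a primitive of `G`, then `Φ y = ∫_Ω H(|x - y|) dx` has
gradient `-∫_Ω G(|x - y|) (x - y) / |x - y| dx`: the integrand can fail to be differentiable in `y`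
only at `x = y`, a null set. As `G ≥ 0`, `H` is nondecreasing on `[0, ∞)`, and projecting `y` on a
compact convex set containing `Ω` increases no distance `|x - y|` with `x ∈ Ω`. So a minimizer of
`Φ` over that set minimizes `Φ` over the whole space, and the gradient vanishes there.
-/

open scoped NNReal

section RadialPrimitive

variable {G : ℝ → ℝ}

/-- The primitive of a profile `G : [0, ∞) → ℝ` vanishing at `0`. Integrating the even extension
`t ↦ G |t|` makes it differentiable on the whole line, whatever the values of `G` at negative
arguments. -/
noncomputable def radialPrimitive (G : ℝ → ℝ) (r : ℝ) : ℝ := ∫ t in (0 : ℝ)..r, G |t|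

lemma hasDerivAt_radialPrimitive (hG : ContinuousOn G (Ici 0)) (r : ℝ) :
    HasDerivAt (radialPrimitive G) (G |r|) r :=
  have hG_abs : Continuous fun t : ℝ => G |t| := hG.comp_continuous continuous_abs abs_nonneg
  intervalIntegral.integral_hasDerivAt_right (hG_abs.intervalIntegrable _ _)
    hG_abs.aestronglyMeasurable.stronglyMeasurableAtFilter hG_abs.continuousAt

lemma continuous_radialPrimitive (hG : ContinuousOn G (Ici 0)) : Continuous (radialPrimitive G) :=
  continuous_iff_continuousAt.2 fun r => (hasDerivAt_radialPrimitive hG r).continuousAt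

lemma monotoneOn_radialPrimitive (hG : ContinuousOn G (Ici 0)) (hG_nonneg : ∀ r, 0 < r → 0 ≤ G r) :
    MonotoneOn (radialPrimitive G) (Ici 0) := by
  refine monotoneOn_of_deriv_nonneg (convex_Ici 0) (continuous_radialPrimitive hG).continuousOn
    (fun r _ => (hasDerivAt_radialPrimitive hG r).differentiableAt.differentiableWithinAt)
    fun r hr => ?_
  rw [interior_Ici, mem_Ioi] at hr
  rw [(hasDerivAt_radialPrimitive hG r).deriv]
  exact hG_nonneg _ (abs_pos.2 hr.ne')

lemma lipschitzOnWith_radialPrimitive (hG : ContinuousOn G (Ici 0)) {R : ℝ} {C : ℝ≥0}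
    (hC : ∀ r ∈ Icc 0 R, ‖G r‖ ≤ C) : LipschitzOnWith C (radialPrimitive G) (Icc 0 R) := by
  refine (convex_Icc 0 R).lipschitzOnWith_of_nnnorm_hasDerivWithin_le
    (fun r _ => (hasDerivAt_radialPrimitive hG r).hasDerivWithinAt) fun r hr => ?_
  rw [abs_of_nonneg hr.1]
  exact hC r hr

lemma exists_nnreal_forall_mem_Icc_norm_le (hG : ContinuousOn G (Ici 0)) (R : ℝ) :
    ∃ C : ℝ≥0, ∀ r ∈ Icc 0 R, ‖G r‖ ≤ C := by
  obtain ⟨C, hC⟩ := isCompact_Icc.exists_bound_of_continuousOn (hG.mono Icc_subset_Ici_self)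
  exact ⟨C.toNNReal, fun r hr => (hC r hr).trans C.le_coe_toNNReal⟩

end RadialPrimitive

section RadialEnergy

variable {E : Type*} [NormedAddCommGroup E] {G : ℝ → ℝ}

lemma lipschitzOnWith_radialPrimitive_norm_sub (hG : ContinuousOn G (Ici 0)) {R : ℝ} {C : ℝ≥0}
    (hC : ∀ r ∈ Icc 0 R, ‖G r‖ ≤ C) {x : E} {s : Set E} (hs : ∀ z ∈ s, ‖x - z‖ ≤ R) :
    LipschitzOnWith C (fun z => radialPrimitive G ‖x - z‖) s := by
  have h_norm : LipschitzOnWith 1 (fun z => ‖x - z‖) s := by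
    simpa only [← dist_eq_norm] using (LipschitzWith.dist_right x).lipschitzOnWith (s := s)
  simpa only [mul_one, Function.comp_def] using (lipschitzOnWith_radialPrimitive hG hC).comp h_norm
    fun z hz => ⟨norm_nonneg _, hs z hz⟩

variable [MeasurableSpace E] {μ : Measure E} {K : Set E}

/-- The potential of the mass distribution `μ` for the radial interaction whose force profile is
`G`; its gradient is minus the integral of `radialField G`. -/
noncomputable def radialEnergy (G : ℝ → ℝ) (μ : Measure E) (y : E) : ℝ :=
  ∫ x, radialPrimitive G ‖x - y‖ ∂μ

variable [BorelSpace E] [IsFiniteMeasure μ]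

lemma integrable_radialPrimitive_norm_sub (hG : ContinuousOn G (Ici 0)) (hK : IsCompact K)
    (hμK : ∀ᵐ x ∂μ, x ∈ K) (y : E) : Integrable (fun x => radialPrimitive G ‖x - y‖) μ := by
  have h_cont : Continuous fun x : E => radialPrimitive G ‖x - y‖ :=
    (continuous_radialPrimitive hG).comp (by fun_prop)
  have h_int : IntegrableOn (fun x => radialPrimitive G ‖x - y‖) K μ :=
    h_cont.continuousOn.integrableOn_compact hK
  rwa [IntegrableOn, Measure.restrict_eq_self_of_ae_mem hμK] at h_int

lemma radialEnergy_le_of_forall_norm_sub_le (hG : ContinuousOn G (Ici 0))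
    (hG_nonneg : ∀ r, 0 < r → 0 ≤ G r) (hK : IsCompact K) (hμK : ∀ᵐ x ∂μ, x ∈ K) {u v : E}
    (huv : ∀ w ∈ K, ‖w - v‖ ≤ ‖w - u‖) : radialEnergy G μ v ≤ radialEnergy G μ u :=
  integral_mono_ae (integrable_radialPrimitive_norm_sub hG hK hμK v)
    (integrable_radialPrimitive_norm_sub hG hK hμK u) <| hμK.mono fun x hx =>
      monotoneOn_radialPrimitive hG hG_nonneg (norm_nonneg _) (norm_nonneg _) (huv x hx)

end RadialEnergy

section RadialField

variable {E : Type*} [NormedAddCommGroup E] [NormedSpace ℝ E] {G : ℝ → ℝ}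

/-- The radial vector field centered at `y` whose value at `x` points from `y` to `x` and has
length `|G ‖x - y‖|` for `x ≠ y`; it is `0` at `x = y`. -/
noncomputable def radialField (G : ℝ → ℝ) (y x : E) : E := (G ‖x - y‖ / ‖x - y‖) • (x - y)

lemma norm_radialField_le (G : ℝ → ℝ) (y x : E) : ‖radialField G y x‖ ≤ ‖G ‖x - y‖‖ := by
  rw [radialField, norm_smul, norm_div, norm_norm, div_mul_eq_mul_div, mul_div_assoc]
  exact mul_le_of_le_one_right (norm_nonneg _) (div_self_le_one _)

lemma continuousOn_radialField (hG : ContinuousOn G (Ici 0)) (y : E) :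
    ContinuousOn (radialField G y) {y}ᶜ := by
  have h_norm : Continuous fun x : E => ‖x - y‖ := by fun_prop
  have hG_norm : Continuous fun x : E => G ‖x - y‖ :=
    hG.comp_continuous h_norm fun _ => norm_nonneg _
  exact (hG_norm.continuousOn.div h_norm.continuousOn fun x hx =>
    norm_ne_zero_iff.2 (sub_ne_zero.2 hx)).smul (by fun_prop)

lemma integrable_radialField [MeasurableSpace E] [BorelSpace E] {μ : Measure E} [IsFiniteMeasure μ]
    [NullSingletonClass μ] {K : Set E} (hG : ContinuousOn G (Ici 0)) (hK : IsCompact K)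
    (hμK : ∀ᵐ x ∂μ, x ∈ K) (y : E) : Integrable (radialField G y) μ := by
  have hμ_diff : ∀ᵐ x ∂μ, x ∈ K \ {y} := hμK.and (Measure.ae_ne μ y)
  have h_meas : AEStronglyMeasurable (radialField G y) (μ.restrict (K \ {y})) :=
    ((continuousOn_radialField hG y).mono
      (sdiff_subset_compl K {y})).aestronglyMeasurable_of_isSeparable
      (hK.measurableSet.diff (measurableSet_singleton y)) (hK.isSeparable.mono sdiff_subset)
  rw [Measure.restrict_eq_self_of_ae_mem hμ_diff] at h_meas
  obtain ⟨R, hR⟩ := hK.isBounded.subset_closedBall y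
  obtain ⟨C, hC⟩ := exists_nnreal_forall_mem_Icc_norm_le hG R
  refine .of_bound h_meas C (hμK.mono fun x hx => (norm_radialField_le G y x).trans ?_)
  exact hC _ ⟨norm_nonneg _, mem_closedBall_iff_norm.1 (hR hx)⟩

end RadialField

section InnerProductSpace

variable {E : Type*} [NormedAddCommGroup E] [InnerProductSpace ℝ E] {G : ℝ → ℝ} {K : Set E}

lemma hasFDerivAt_norm_of_ne_zero {x : E} (hx : x ≠ 0) :
    HasFDerivAt (fun z : E => ‖z‖) (‖x‖⁻¹ • innerSL ℝ x) x := by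
  have h := (hasStrictFDerivAt_norm_sq x).hasFDerivAt.sqrt (pow_ne_zero 2 (norm_ne_zero_iff.2 hx))
  simp only [Real.sqrt_sq (norm_nonneg _)] at h
  refine h.congr_fderiv ?_
  ext v
  simp only [one_div, mul_inv_rev, smul_apply, coe_innerSL_apply, nsmul_eq_mul, Nat.cast_ofNat,
    smul_eq_mul]
  ring

lemma hasFDerivAt_radialPrimitive_norm_sub (hG : ContinuousOn G (Ici 0)) {x y : E} (hxy : x ≠ y) :
    HasFDerivAt (fun z => radialPrimitive G ‖x - z‖) (-innerSL ℝ (radialField G y x)) y := by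
  have h_norm : HasFDerivAt (fun z => ‖x - z‖) _ y :=
    (hasFDerivAt_norm_of_ne_zero (sub_ne_zero.2 hxy)).comp y ((hasFDerivAt_id y).const_sub x)
  refine ((hasDerivAt_radialPrimitive hG ‖x - y‖).comp_hasFDerivAt y h_norm).congr_fderiv ?_
  ext v
  simp only [radialField, abs_norm, map_sub, map_smul, ContinuousLinearMap.comp_neg,
    ContinuousLinearMap.comp_id, smul_neg, neg_apply, smul_apply, sub_apply, coe_innerSL_apply,
    smul_eq_mul, neg_inj]
  ring

lemma exists_mem_forall_norm_sub_le (hK : IsComplete K) (hK_convex : Convex ℝ K)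
    (hK_nonempty : K.Nonempty) (u : E) : ∃ v ∈ K, ∀ w ∈ K, ‖w - v‖ ≤ ‖w - u‖ := by
  obtain ⟨v, hv, h_proj⟩ := exists_norm_eq_iInf_of_complete_convex hK_nonempty hK hK_convex u
  rw [norm_eq_iInf_iff_real_inner_le_zero hK_convex hv] at h_proj
  refine ⟨v, hv, fun w hw => le_of_sq_le_sq ?_ (norm_nonneg _)⟩
  have h_expand : ‖w - u‖ ^ 2 = ‖w - v‖ ^ 2 - 2 * inner ℝ (u - v) (w - v) + ‖u - v‖ ^ 2 := by
    rw [real_inner_comm, ← norm_sub_sq_real, sub_sub_sub_cancel_right]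
  linarith [h_proj w hw, sq_nonneg ‖u - v‖]

variable [CompleteSpace E] [MeasurableSpace E] [BorelSpace E] {μ : Measure E} [IsFiniteMeasure μ]
  [NullSingletonClass μ]

lemma hasGradientAt_radialEnergy (hG : ContinuousOn G (Ici 0)) (hK : IsCompact K)
    (hμK : ∀ᵐ x ∂μ, x ∈ K) (y : E) :
    HasGradientAt (radialEnergy G μ) (-∫ x, radialField G y x ∂μ) y := by
  obtain ⟨R, hR⟩ := hK.isBounded.subset_closedBall y
  obtain ⟨C, hC⟩ := exists_nnreal_forall_mem_Icc_norm_le hG (R + 1)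
  have h_dist : ∀ x ∈ K, ∀ z ∈ Metric.ball y 1, ‖x - z‖ ≤ R + 1 := fun x hx z hz => by
    rw [← dist_eq_norm]
    exact (dist_triangle_right x z y).trans (add_le_add (hR hx) (Metric.mem_ball.1 hz).le)
  have h_int := integrable_radialPrimitive_norm_sub hG hK hμK
  have h_field := integrable_radialField hG hK hμK y
  have h_deriv : HasFDerivAt (radialEnergy G μ) (∫ x, -innerSL ℝ (radialField G y x) ∂μ) y := by
    refine (hasFDerivAt_integral_of_dominated_loc_of_lip (bound := fun _ => C)
      (Metric.ball_mem_nhds y one_pos) (.of_forall fun z => (h_int z).aestronglyMeasurable)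
      (h_int y) ((innerSL ℝ).integrable_comp h_field).neg.aestronglyMeasurable
      (hμK.mono fun x hx => ?_) (integrable_const _)
      ((Measure.ae_ne μ y).mono fun x hx => hasFDerivAt_radialPrimitive_norm_sub hG hx)).2
    rw [Real.nnabs_coe]
    exact lipschitzOnWith_radialPrimitive_norm_sub hG hC (h_dist x hx)
  rw [integral_neg, (innerSL ℝ).integral_comp_comm h_field, ← map_neg] at h_deriv
  exact hasGradientAt_iff_hasFDerivAt.2 h_deriv

theorem exists_center_vector_field_vanishes_general (hK : IsCompact K) (hK_convex : Convex ℝ K)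
    (hK_nonempty : K.Nonempty) (hμK : ∀ᵐ x ∂μ, x ∈ K) (hG : ContinuousOn G (Ici 0))
    (hG_nonneg : ∀ r, 0 < r → 0 ≤ G r) :
    ∃ x₀ ∈ K, ∫ x, (G ‖x - x₀‖ / ‖x - x₀‖) • (x - x₀) ∂μ = 0 := by
  have h_grad := hasGradientAt_radialEnergy hG hK hμK
  obtain ⟨x₀, hx₀, h_min⟩ :=
    hK.exists_isMinOn hK_nonempty fun y _ => (h_grad y).continuousAt.continuousWithinAt
  have h_global : ∀ u, radialEnergy G μ x₀ ≤ radialEnergy G μ u := fun u => by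
    obtain ⟨v, hv, hvu⟩ := exists_mem_forall_norm_sub_le hK.isComplete hK_convex hK_nonempty u
    exact (h_min hv).trans (radialEnergy_le_of_forall_norm_sub_le hG hG_nonneg hK hμK hvu)
  have h_zero := IsLocalMin.hasFDerivAt_eq_zero (.of_forall h_global) (h_grad x₀).hasFDerivAt
  exact ⟨x₀, hx₀, by simpa [radialField] using h_zero⟩

end InnerProductSpace

/-- **Existence of a center (Weinberger's topological argument).**
Let `n ≥ 2` and let `Ω ⊂ ℝⁿ` be a bounded open set of positive Lebesgue measure. Let
`G : [0,∞) → ℝ` be continuous and bounded with `G(r) > 0` for `r > 0`. Then there is a point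
`x⁰` in the closed convex hull of `Ω` such that
`∫_Ω G(|x − x⁰|)·(x − x⁰)/|x − x⁰| dx = 0` (the integrand being `0` at `x = x⁰`). -/
theorem exists_center_vector_field_vanishes {n : ℕ} (hn : 2 ≤ n)
    (Ω : Set (EuclideanSpace ℝ (Fin n))) (hΩo : IsOpen Ω) (hΩb : Bornology.IsBounded Ω)
    (hΩpos : 0 < volume Ω)
    (G : ℝ → ℝ) (hGc : ContinuousOn G (Ici 0))
    (hGbdd : ∃ C : ℝ, ∀ r ∈ Ici (0 : ℝ), |G r| ≤ C)
    (hGpos : ∀ r : ℝ, 0 < r → 0 < G r) :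
    ∃ x₀ ∈ closure (convexHull ℝ Ω),
      (∫ x in Ω, (G ‖x - x₀‖ / ‖x - x₀‖) • (x - x₀)) = (0 : EuclideanSpace ℝ (Fin n)) := by
  have : Nontrivial (Fin n) := Fin.nontrivial_iff_two_le.2 hn
  have hΩK : Ω ⊆ closure (convexHull ℝ Ω) := (subset_convexHull ℝ Ω).trans subset_closure
  have : IsFiniteMeasure (volume.restrict Ω) := isFiniteMeasure_restrict.2 hΩb.measure_lt_top.ne
  exact exists_center_vector_field_vanishes_general (isBounded_convexHull.2 hΩb).isCompact_closure
    (convex_convexHull ℝ Ω).closure ((nonempty_of_measure_ne_zero hΩpos.ne').mono hΩK)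
    ((ae_restrict_mem hΩo.measurableSet).mono fun _ hx => hΩK hx) hGc fun r hr => (hGpos r hr).le
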